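/- For a singular core-labelled tree T, the columns of the CV × N(CV) biadjacency submatrix Q are linearly independent; equivalently η(T) = |CV| - |N(CV)|. -/

import Mathlib

open scoped Classical
open Matrix

/-- Nullity of a real square matrix: dimension of its kernel. -/
noncomputable def nullity {m : Type*} [Fintype m] (A : Matrix m m ℝ) : ℕ :=
  Module.finrank ℝ (LinearMap.ker A.mulVecLin)

variable {V : Type*} [Fintype V] [DecidableEq V]

/-- The set of core vertices of `G`: vertices in the support of some kernel vector. -/
def coreSet (G : SimpleGraph V) [DecidableRel G.Adj] : Set V :=
  {v | ∃ x : V → ℝ, (G.adjMatrix ℝ).mulVec x = 0 ∧ x v ≠ 0}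

/-- The neighbours of core vertices (which are core-forbidden when `coreSet` is
independent). -/
def nbhdSet (G : SimpleGraph V) [DecidableRel G.Adj] : Set V :=
  {v | v ∉ coreSet G ∧ ∃ u ∈ coreSet G, G.Adj u v}

/-- The remote core-forbidden vertices. -/
def remoteSet (G : SimpleGraph V) [DecidableRel G.Adj] : Set V :=
  {v | v ∉ coreSet G ∧ v ∉ nbhdSet G}

/-- The `CV × N(CV)` submatrix `Q` of the adjacency matrix. -/
noncomputable def Qmat (G : SimpleGraph V) [DecidableRel G.Adj] :
    Matrix (coreSet G) (nbhdSet G) ℝ :=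
  Matrix.of fun i j => (G.adjMatrix ℝ) i.val j.val

/-- A finite acyclic graph in which no vertex has exactly one neighbour has no edges. -/
lemma acyclic_no_edge {W : Type*} [Fintype W] (H : SimpleGraph W) (hH : H.IsAcyclic)
    (h : ∀ a b, H.Adj a b → ∃ c, c ≠ b ∧ H.Adj a c) (a b : W) : ¬ H.Adj a b := by
  intro hab
  have : Nonempty W := ⟨a⟩
  obtain ⟨u, v, p, hp, hmax⟩ := SimpleGraph.Walk.exists_isPath_forall_isPath_length_le_length H
  have h1 := hmax a b (SimpleGraph.Walk.cons hab SimpleGraph.Walk.nil)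
    (by simp [hab.ne])
  have hnil : ¬ p.Nil := by
    intro hn
    have := SimpleGraph.Walk.length_eq_zero_iff.mpr hn
    simp at h1
    omega
  obtain ⟨c, hc, huc⟩ := h u p.snd (p.adj_snd hnil)
  by_cases hs : c ∈ p.support
  · exact hc (hH.eq_snd_of_adj_start hp huc hs)
  · have := hmax c v (SimpleGraph.Walk.cons huc.symm p) (hp.cons hs)
    simp at this

lemma exists_other {W : Type*} [Fintype W] (G : SimpleGraph W) [DecidableRel G.Adj]
    (x : W → ℝ) (a b : W) (h0 : (G.adjMatrix ℝ).mulVec x a = 0) (hab : G.Adj a b)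
    (hb : x b ≠ 0) : ∃ c, c ≠ b ∧ G.Adj a c ∧ x c ≠ 0 := by
  by_contra hcon
  push Not at hcon
  rw [SimpleGraph.adjMatrix_mulVec_apply, Finset.sum_eq_single b] at h0
  · exact hb h0
  · intro c hc hcb
    exact hcon c hcb (by simpa using hc)
  · intro hn
    exact absurd hab (by simpa using hn)

lemma core_indep (T : SimpleGraph V) [DecidableRel T.Adj] (hT : T.IsAcyclic) (u v : V)
    (hu : u ∈ coreSet T) (hv : v ∈ coreSet T) : ¬ T.Adj u v := by
  obtain ⟨z, hz, hzu, hzv⟩ : ∃ z : V → ℝ, (T.adjMatrix ℝ).mulVec z = 0 ∧ z u ≠ 0 ∧ z v ≠ 0 := by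
    obtain ⟨x, hx, hxu⟩ := hu
    obtain ⟨y, hy, hyv⟩ := hv
    by_cases h1 : x v = 0
    · by_cases h2 : y u = 0
      · exact ⟨x + y, by rw [Matrix.mulVec_add, hx, hy, add_zero], by simpa [h2] using hxu,
          by simpa [h1] using hyv⟩
      · exact ⟨y, hy, h2, hyv⟩
    · exact ⟨x, hx, hxu, h1⟩
  let H : SimpleGraph V :=
    { Adj := fun a b => T.Adj a b ∧ z a ≠ 0 ∧ z b ≠ 0
      symm := ⟨fun a b h => ⟨h.1.symm, h.2.2, h.2.1⟩⟩
      loopless := ⟨fun a h => T.loopless.irrefl a h.1⟩ }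
  have hle : H ≤ T := fun a b h => h.1
  intro huv
  refine acyclic_no_edge H (hT.anti hle) ?_ u v ⟨huv, hzu, hzv⟩
  rintro a b ⟨hab, ha, hb⟩
  obtain ⟨c, hc, hac, hzc⟩ := exists_other T z a b (congrFun hz a) hab hb
  exact ⟨c, hc, hac, ha, hzc⟩

lemma sum_ext_zero {s : Set V} (f : V → ℝ) (g : s → ℝ) :
    ∑ v : V, f v * (if h : v ∈ s then g ⟨v, h⟩ else 0) = ∑ j : s, f j.1 * g j := by
  rw [← Finset.sum_subset (Finset.subset_univ s.toFinset)]
  · rw [← Finset.sum_coe_sort]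
    refine Fintype.sum_equiv (Equiv.subtypeEquivRight (by simp)) _ _ ?_
    rintro ⟨v, hv⟩
    have hv' : v ∈ s := by simpa using hv
    simp [hv']
    exact Or.inl rfl
  · intro v _ hv
    have hv' : v ∉ s := by simpa using hv
    simp [hv']

lemma Q_inj (T : SimpleGraph V) [DecidableRel T.Adj] (hT : T.IsAcyclic)
    (g : nbhdSet T → ℝ) (hg : (Qmat T).mulVec g = 0) : g = 0 := by
  let y : V → ℝ := fun v => if h : v ∈ nbhdSet T then g ⟨v, h⟩ else 0
  have hy : ∀ u ∈ coreSet T, (T.adjMatrix ℝ).mulVec y u = 0 := by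
    intro u hu
    have h1 := congrFun hg ⟨u, hu⟩
    have h2 := sum_ext_zero (fun v => T.adjMatrix ℝ u v) g
    exact h2.trans h1
  let H : SimpleGraph V :=
    { Adj := fun a b => T.Adj a b ∧ ((a ∈ coreSet T ∧ y b ≠ 0) ∨ (b ∈ coreSet T ∧ y a ≠ 0))
      symm := ⟨fun a b h => ⟨h.1.symm, h.2.symm⟩⟩
      loopless := ⟨fun a h => T.loopless.irrefl a h.1⟩ }
  have hle : H ≤ T := fun a b h => h.1
  have key := acyclic_no_edge H (hT.anti hle) (by
    rintro a b ⟨hab, ⟨ha, hb⟩ | ⟨hb, ha⟩⟩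
    · obtain ⟨c, hc, hac, hyc⟩ := exists_other T y a b (hy a ha) hab hb
      exact ⟨c, hc, hac, Or.inl ⟨ha, hyc⟩⟩
    · obtain ⟨x, hx, hxb⟩ := hb
      obtain ⟨c, hc, hac, hxc⟩ := exists_other T x a b (congrFun hx a) hab hxb
      exact ⟨c, hc, hac, Or.inr ⟨⟨x, hx, hxc⟩, ha⟩⟩)
  funext j
  by_contra hj
  obtain ⟨w, hw⟩ := j
  obtain ⟨u, hu, huw⟩ := hw.2
  refine key u w ⟨huw, Or.inl ⟨hu, ?_⟩⟩
  simpa [y, hw] using hj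

/-- For a singular tree, the columns of the `CV × N(CV)` submatrix `Q` are linearly
independent; equivalently `η(T) = |CV| - |N(CV)|`. -/
theorem stmt_19 (T : SimpleGraph V) [DecidableRel T.Adj] (hT : T.IsTree)
    (hsing : ∃ x : V → ℝ, x ≠ 0 ∧ (T.adjMatrix ℝ).mulVec x = 0) :
    LinearIndependent ℝ (fun (j : nbhdSet T) => fun i => Qmat T i j)
      ∧ (nullity (T.adjMatrix ℝ) : ℤ)
          = (Fintype.card (coreSet T) : ℤ) - Fintype.card (nbhdSet T) := by
  have hac := hT.isAcyclic
  have hli : LinearIndependent ℝ (Qmat T).col := by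
    rw [← Matrix.mulVec_injective_iff]
    intro a b hab
    have := Q_inj T hac (a - b) (by rw [Matrix.mulVec_sub]; exact sub_eq_zero.mpr hab)
    exact sub_eq_zero.mp this
  refine ⟨hli, ?_⟩
  have hrank : (Qmat T)ᵀ.rank = Fintype.card (nbhdSet T) := by
    have : LinearIndependent ℝ (Qmat T)ᵀ.row := hli
    exact this.rank_matrix
  have hrn := LinearMap.finrank_range_add_finrank_ker (Qmat T)ᵀ.mulVecLin
  rw [Module.finrank_fintype_fun_eq_card] at hrn
  change (Qmat T)ᵀ.rank + _ = _ at hrn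
  let r : LinearMap.ker (T.adjMatrix ℝ).mulVecLin →ₗ[ℝ] (coreSet T → ℝ) :=
    (LinearMap.funLeft ℝ ℝ (Subtype.val : coreSet T → V)) ∘ₗ Submodule.subtype _
  have hsupp : ∀ x : V → ℝ, (T.adjMatrix ℝ).mulVec x = 0 → ∀ v, v ∉ coreSet T → x v = 0 := by
    intro x hx v hv
    by_contra h
    exact hv ⟨x, hx, h⟩
  have hrinj : Function.Injective r := by
    rw [← LinearMap.ker_eq_bot, LinearMap.ker_eq_bot']
    rintro ⟨x, hx⟩ h0
    ext v
    by_cases hv : v ∈ coreSet T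
    · exact congrFun h0 ⟨v, hv⟩
    · exact hsupp x hx v hv
  have hrange : LinearMap.range r = LinearMap.ker (Qmat T)ᵀ.mulVecLin := by
    ext g
    constructor
    · rintro ⟨⟨x, hx⟩, rfl⟩
      have hx' : (T.adjMatrix ℝ).mulVec x = 0 := hx
      change (Qmat T)ᵀ.mulVec _ = 0
      funext j
      have h1 := sum_ext_zero (fun v => T.adjMatrix ℝ j.1 v) (fun i : coreSet T => x i.1)
      have h2 : ∀ v, (if h : v ∈ coreSet T then x v else 0) = x v := by
        intro v
        by_cases hv : v ∈ coreSet T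
        · simp [hv]
        · simp [hv, hsupp x hx' v hv]
      simp only [h2] at h1
      have h3 := h1.symm.trans (congrFun hx' j.1)
      refine Eq.trans ?_ h3
      refine Finset.sum_congr rfl fun i _ => ?_
      simp [Qmat, r, T.adj_comm]
    · intro hg
      have hg' : (Qmat T)ᵀ.mulVec g = 0 := hg
      let x : V → ℝ := fun v => if h : v ∈ coreSet T then g ⟨v, h⟩ else 0
      have hx : (T.adjMatrix ℝ).mulVec x = 0 := by
        funext w
        have h1 : (T.adjMatrix ℝ).mulVec x w = _ :=
          sum_ext_zero (fun v => T.adjMatrix ℝ w v) g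
        rw [h1]
        by_cases hw : w ∈ nbhdSet T
        · refine Eq.trans ?_ (congrFun hg' ⟨w, hw⟩)
          refine Finset.sum_congr rfl fun i _ => ?_
          simp [Qmat, T.adj_comm]
        · refine Finset.sum_eq_zero fun i _ => ?_
          have : ¬ T.Adj w i.1 := by
            intro hwi
            by_cases hwc : w ∈ coreSet T
            · exact core_indep T hac w i.1 hwc i.2 hwi
            · exact hw ⟨hwc, i.1, i.2, hwi.symm⟩
          simp [this]
      refine ⟨⟨x, hx⟩, ?_⟩
      funext i
      simp [r, x, LinearMap.funLeft]
  have hfin := LinearMap.finrank_range_of_inj hrinj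
  rw [hrange] at hfin
  unfold nullity
  omega
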